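/- Let X be a finite set, k ≥ 2 an integer, and let S be a family of k-element subsets of X. Suppose that for some real r > 0, whenever X_δ is a random subset of X including each element independently with probability δ = 1/(2p) (p ≥ 2 an integer), we have Pr(∃ S ∈ S : S ⊆ X_δ) > 1/2. Then S contains p pairwise disjoint sets. -/

import Mathlib

open scoped Classical in
/-- The probability that the Bernoulli(`δ`) random subset of `X` (each element
included independently with probability `δ`) satisfies the predicate `E`. -/
noncomputable def bernoulliPr {α : Type*} [DecidableEq α] (X : Finset α) (δ : ℝ)
    (E : Finset α → Prop) : ℝ :=
  ∑ A ∈ X.powerset, (if E A then δ ^ A.card * (1 - δ) ^ (X.card - A.card) else 0)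

/-! Color each element of `X` independently and uniformly with one of `n` colors. Every color
class is then distributed as the Bernoulli(`1 / n`) random subset of `X`, so the expected number of
classes satisfying `E` is `n` times the probability of `E`, and some coloring attains at least this
many. If `E` says that a set contains a member of `S`, choosing such a member in each of these
classes yields pairwise disjoint sets, which are distinct because they are nonempty. -/

open Finset Fintype
open scoped BigOperators

section ColorClass

variable {α ι : Type*} {X : Finset α} [DecidableEq ι]

/-- The color class `f ⁻¹' {i}` of a coloring `f` of `X`: a uniformly random `f` gives the random
partition of `X`. It is a finset of `α`, not of the subtype `X`, to be compared with subsets of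
`X`. -/
def colorClass (f : X → ι) (i : ι) : Finset α :=
  ({x | f x = i} : Finset X).map (.subtype _)

theorem mem_colorClass {f : X → ι} {i : ι} {a : α} :
    a ∈ colorClass f i ↔ ∃ h : a ∈ X, f ⟨a, h⟩ = i := by
  simp [colorClass]

theorem colorClass_subset (f : X → ι) (i : ι) : colorClass f i ⊆ X :=
  fun _ ha => (mem_colorClass.1 ha).1

theorem pairwiseDisjoint_colorClass (f : X → ι) (I : Set ι) :
    I.PairwiseDisjoint (colorClass f) := by
  intro i _ j _ hij
  refine disjoint_left.2 fun a hai haj => hij ?_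
  obtain ⟨_, hi⟩ := mem_colorClass.1 hai
  obtain ⟨_, hj⟩ := mem_colorClass.1 haj
  exact hi.symm.trans hj

theorem colorClass_eq_iff {f : X → ι} {i : ι} {A : Finset α} (hA : A ⊆ X) :
    colorClass f i = A ↔ ∀ x : X, f x = i ↔ ↑x ∈ A := by
  simp only [Finset.ext_iff, mem_colorClass, Subtype.forall]
  exact ⟨fun h a ha => by simpa [ha] using h a,
    fun h a => ⟨fun ⟨ha, hf⟩ => (h a ha).1 hf, fun haA => ⟨hA haA, (h a (hA haA)).2 haA⟩⟩⟩

variable [DecidableEq α] [Fintype ι]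

theorem filter_colorClass_eq (i : ι) {A : Finset α} (hA : A ⊆ X) :
    ({f : X → ι | colorClass f i = A} : Finset (X → ι)) =
      piFinset fun x : X => if ↑x ∈ A then {i} else {i}ᶜ := by
  ext f
  simp only [mem_filter_univ, colorClass_eq_iff hA, mem_piFinset]
  refine forall_congr' fun x => ?_
  split_ifs with hx <;> simp [hx]

theorem card_filter_colorClass_eq (i : ι) {A : Finset α} (hA : A ⊆ X) :
    #{f : X → ι | colorClass f i = A} = (card ι - 1) ^ (#X - #A) := by
  calc #{f : X → ι | colorClass f i = A}
      = ∏ x : X, if ↑x ∈ A then 1 else card ι - 1 := by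
        simp [filter_colorClass_eq i hA, apply_ite Finset.card, card_compl]
    _ = ∏ a ∈ X, if a ∈ A then 1 else card ι - 1 :=
        prod_coe_sort X fun a => if a ∈ A then 1 else card ι - 1
    _ = (card ι - 1) ^ (#X - #A) := by
        simp [prod_ite, filter_notMem_eq_sdiff, card_sdiff_of_subset hA]

theorem dens_filter_colorClass_eq (i : ι) {A : Finset α} (hA : A ⊆ X) :
    (dens {f : X → ι | colorClass f i = A} : ℝ) =
      (1 / card ι) ^ #A * (1 - 1 / card ι) ^ (#X - #A) := by
  have : Nonempty ι := ⟨i⟩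
  have hcard : (card ι : ℝ) ≠ 0 := by simp
  have hpow : (card ι : ℝ) ^ #X = card ι ^ #A * card ι ^ (#X - #A) := by
    rw [← pow_add, Nat.add_sub_cancel' (card_le_card hA)]
  rw [nnratCast_dens, card_filter_colorClass_eq i hA, card_fun, card_coe, Nat.cast_pow,
    Nat.cast_pow, Nat.cast_pred card_pos, hpow, one_sub_div hcard, div_pow, div_pow, one_pow,
    div_mul_div_comm, one_mul]

theorem dens_filter_colorClass_eq_bernoulliPr (i : ι) (E : Finset α → Prop) [DecidablePred E] :
    (dens {f : X → ι | E (colorClass f i)} : ℝ) = bernoulliPr X (1 / card ι) E := by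
  have hmaps : Set.MapsTo (colorClass · i) ({f : X → ι | E (colorClass f i)} : Finset (X → ι))
      (X.powerset : Set (Finset α)) :=
    fun f _ => mem_powerset.2 (colorClass_subset f i)
  rw [dens_eq_sum_dens_fiberwise hmaps, NNRat.cast_sum, bernoulliPr]
  refine sum_congr rfl fun A hA => ?_
  rw [filter_filter]
  split_ifs with hE
  · rw [← dens_filter_colorClass_eq i (mem_powerset.1 hA)]
    congr 2
    exact filter_congr fun f _ => and_iff_right_of_imp fun h => h ▸ hE
  · rw [filter_false_of_mem fun f _ ⟨hEf, hfA⟩ => hE (hfA ▸ hEf), dens_empty, NNRat.cast_zero]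

theorem expect_card_filter_colorClass (E : Finset α → Prop) [DecidablePred E] :
    𝔼 f : X → ι, (#{i | E (colorClass f i)} : ℝ) = card ι * bernoulliPr X (1 / card ι) E := by
  calc 𝔼 f : X → ι, (#{i | E (colorClass f i)} : ℝ)
      = ∑ i, 𝔼 f : X → ι, if E (colorClass f i) then (1 : ℝ) else 0 := by
        simp only [card_filter, Nat.cast_sum, Nat.cast_ite, Nat.cast_one, Nat.cast_zero,
          expect_sum_comm]
    _ = ∑ i : ι, (dens {f : X → ι | E (colorClass f i)} : ℝ) := by
        simp only [Fintype.expect_eq_sum_div_card, sum_boole, nnratCast_dens]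
    _ = card ι * bernoulliPr X (1 / card ι) E := by
        simp only [dens_filter_colorClass_eq_bernoulliPr, sum_const, card_univ, nsmul_eq_mul]

theorem exists_card_mul_bernoulliPr_le_card_filter_colorClass [Nonempty ι] (X : Finset α)
    (E : Finset α → Prop) [DecidablePred E] :
    ∃ f : X → ι, card ι * bernoulliPr X (1 / card ι) E ≤ #{i | E (colorClass f i)} := by
  have hsum : ∑ _f : X → ι, card ι * bernoulliPr X (1 / card ι) E ≤
      ∑ f : X → ι, (#{i | E (colorClass f i)} : ℝ) := by
    rw [sum_const, card_univ, ← expect_card_filter_colorClass, Fintype.card_smul_expect]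
  obtain ⟨f, -, hf⟩ := exists_le_of_sum_le univ_nonempty hsum
  exact ⟨f, hf⟩

end ColorClass

theorem exists_pairwiseDisjoint_card_eq_of_forall_exists_le {β ι : Type*} [PartialOrder β]
    [OrderBot β] {S : Finset β} (hS : ⊥ ∉ S) {I : Finset ι} {V : ι → β}
    (hV : (I : Set ι).PairwiseDisjoint V) (hSV : ∀ i ∈ I, ∃ A ∈ S, A ≤ V i) :
    ∃ P ⊆ S, #P = #I ∧ (P : Set β).PairwiseDisjoint id := by
  classical
  choose! g hgS hgV using hSV
  have hg : (I : Set ι).PairwiseDisjoint g := hV.mono_on hgV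
  have hinj : Set.InjOn g I := by
    intro i hi j hj hij
    refine hg.elim hi hj fun hdisj => ne_of_mem_of_not_mem (hgS i hi) hS ?_
    rwa [← hij, disjoint_self] at hdisj
  refine ⟨I.image g, image_subset_iff.2 hgS, card_image_of_injOn hinj, ?_⟩
  rwa [coe_image, hinj.pairwiseDisjoint_image]

theorem disjoint_sets_of_prob_gt_half_general {α : Type*} [DecidableEq α] (X : Finset α)
    {m n : ℕ} (hn : n ≠ 0) {S : Finset (Finset α)} (hS : ∅ ∉ S)
    (hprob : m ≤ n * bernoulliPr X (1 / n) (fun B => ∃ A ∈ S, A ⊆ B)) :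
    ∃ P ⊆ S, #P = m ∧ (P : Set (Finset α)).PairwiseDisjoint id := by
  have : NeZero n := ⟨hn⟩
  obtain ⟨f, hf⟩ := exists_card_mul_bernoulliPr_le_card_filter_colorClass (ι := Fin n) X
    fun B => ∃ A ∈ S, A ⊆ B
  rw [Fintype.card_fin] at hf
  obtain ⟨I, hI, rfl⟩ := exists_subset_card_eq (Nat.cast_le.1 (hprob.trans hf))
  exact exists_pairwiseDisjoint_card_eq_of_forall_exists_le hS (pairwiseDisjoint_colorClass f I)
    fun i hi => (mem_filter.1 (hI hi)).2

/-- If, for `δ = 1/(2p)`, the Bernoulli(`δ`) random subset of `X` contains a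
member of `S` with probability greater than `1/2`, then `S` contains `p`
pairwise disjoint sets. -/
theorem disjoint_sets_of_prob_gt_half {α : Type*} [DecidableEq α] (X : Finset α)
    (k p : ℕ) (hk : 2 ≤ k) (hp : 2 ≤ p) (S : Finset (Finset α))
    (hsub : ∀ A ∈ S, A ⊆ X) (hcard : ∀ A ∈ S, A.card = k)
    (hprob : bernoulliPr X (1 / (2 * p)) (fun B => ∃ A ∈ S, A ⊆ B) > 1 / 2) :
    ∃ P ⊆ S, P.card = p ∧ (P : Set (Finset α)).PairwiseDisjoint id := by
  refine disjoint_sets_of_prob_gt_half_general X (n := 2 * p) (by lia)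
    (fun h => by simp [← hcard _ h] at hk) ?_
  calc (p : ℝ) = ↑(2 * p) * (1 / 2) := by push_cast; ring
    _ ≤ ↑(2 * p) * bernoulliPr X (1 / ↑(2 * p)) (fun B => ∃ A ∈ S, A ⊆ B) := by
      push_cast; gcongr
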